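/- arXiv:math/0202288 — 5 statements merged into one kernel-verified Lean document; each statement's English description precedes it below -/
import Mathlib

section
/- The ℂ-algebra homomorphism ℂ[b,q,r₁,r₂] → B/I sending b ↦ b, q ↦ q, r₁ ↦ r_{2,1}, r₂ ↦ r_{2,2} is surjective, and its kernel is the ideal (q(r₁+r₂−4b)) + (the three components of R_{n+1}); that is, it induces an isomorphism of ℂ-algebras ℂ[b,q,r₁,r₂]/(q(r₁+r₂−4b), R_{n+1}) ≅ B/I. -/
open MvPolynomial

noncomputable section

/-! We write `n = m + 2` (so that `n ≥ 2` ranges over all allowed values as `m` ranges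
over `ℕ`).  The polynomial ring `B` in `3n − 1` variables has index type
`Fin 2 ⊕ (Fin (m+1) × Fin 3)`: `Sum.inl 0 = b`, `Sum.inl 1 = q`, and `Sum.inr (k, j)` is
the `j`-th component of `r̂_{k+2} = (b_{k+2}, r_{k+2,1}, r_{k+2,2})ᵀ`. -/

/-- The polynomial ring `B = ℂ[b, q, b₂,…,b_n, (r_{ν,1}, r_{ν,2})]` in `3n − 1`
variables, `n = m + 2`. -/
abbrev B (m : ℕ) : Type := MvPolynomial (Fin 2 ⊕ (Fin (m + 1) × Fin 3)) ℂ

variable (m : ℕ)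

/-- The variable `b`. -/
def bB : B m := X (Sum.inl 0)

/-- The variable `q`. -/
def qB : B m := X (Sum.inl 1)

/-- The vector `r̂_{k+2} = (b_{k+2}, r_{k+2,1}, r_{k+2,2})ᵀ` of variables. -/
def rhat (k : Fin (m + 1)) (j : Fin 3) : B m := X (Sum.inr (k, j))

/-- The 3×3 matrix `Ê` over `B`, with rows `(b, 2q, 2q)`, `(1, r_{2,1}−b, 0)`,
`(1, 0, r_{2,2}−b)`. -/
def Ehat : Matrix (Fin 3) (Fin 3) (B m) :=
  !![bB m, 2 * qB m, 2 * qB m;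
     1, rhat m 0 1 - bB m, 0;
     1, 0, rhat m 0 2 - bB m]

/-- The ideal `I ⊆ B` generated by `b₂ − b² − 4q`, `q(r_{2,1}+r_{2,2}−4b)`, the three
components of `r̂_{ν+1} − Ê·r̂_ν` for `2 ≤ ν ≤ n−1`, and the three components of
`Ê·r̂_n`. -/
def IB : Ideal (B m) :=
  Ideal.span
    ({rhat m 0 0 - bB m ^ 2 - 4 * qB m,
       qB m * (rhat m 0 1 + rhat m 0 2 - 4 * bB m)} ∪
      (Set.range fun p : Fin m × Fin 3 =>
        rhat m p.1.succ p.2 - (Ehat m).mulVec (rhat m p.1.castSucc) p.2) ∪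
      (Set.range fun j : Fin 3 => (Ehat m).mulVec (rhat m (Fin.last m)) j))

/-- `ℂ[b,q,r₁,r₂]`, with variables `0 = b`, `1 = q`, `2 = r₁`, `3 = r₂`. -/
abbrev P4 : Type := MvPolynomial (Fin 4) ℂ

/-- The 3×3 matrix `E` over `ℂ[b,q,r₁,r₂]`, with rows `(b,2q,2q)`, `(1,r₁−b,0)`,
`(1,0,r₂−b)`. -/
def E3 : Matrix (Fin 3) (Fin 3) P4 :=
  !![X 0, 2 * X 1, 2 * X 1;
     1, X 2 - X 0, 0;
     1, 0, X 3 - X 0]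

/-- `R_{n+1} = Eⁿ·(b,1,1)ᵀ`. -/
def Rv (n : ℕ) : Fin 3 → P4 := (E3 ^ n).mulVec ![X 0, 1, 1]

/-- The `ℂ`-algebra homomorphism `ℂ[b,q,r₁,r₂] → B/I` sending `b ↦ b`, `q ↦ q`,
`r₁ ↦ r_{2,1}`, `r₂ ↦ r_{2,2}`. -/
def ψ : P4 →ₐ[ℂ] (B m ⧸ IB m) :=
  aeval ![Ideal.Quotient.mk (IB m) (bB m), Ideal.Quotient.mk (IB m) (qB m),
    Ideal.Quotient.mk (IB m) (rhat m 0 1), Ideal.Quotient.mk (IB m) (rhat m 0 2)]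

lemma Rv_succ (n : ℕ) : Rv (n + 1) = E3.mulVec (Rv n) := by
  simp [Rv, pow_succ']

lemma Rv_one : Rv 1 = ![X 0 ^ 2 + 4 * X 1, X 2, X 3] := by
  funext j
  fin_cases j <;> simp [Rv, E3, Matrix.mulVec, dotProduct, Fin.sum_univ_three]
  ring

/-- The `ℂ`-algebra homomorphism `B → ℂ[b,q,r₁,r₂]` eliminating the variables `r̂_ν`
through `r̂_ν ↦ R_ν`. -/
def elimHom : B m →ₐ[ℂ] P4 :=
  aeval (Sum.elim ![X 0, X 1] fun p => Rv (p.1 + 1) p.2)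

@[simp] lemma elimHom_bB : elimHom m (bB m) = X 0 := by simp [elimHom, bB]

@[simp] lemma elimHom_qB : elimHom m (qB m) = X 1 := by simp [elimHom, qB]

@[simp] lemma elimHom_rhat (k : Fin (m + 1)) (j : Fin 3) :
    elimHom m (rhat m k j) = Rv (k + 1) j := by
  simp [elimHom, rhat]

lemma elimHom_Ehat_mulVec_rhat (k : Fin (m + 1)) (j : Fin 3) :
    elimHom m ((Ehat m).mulVec (rhat m k) j) = Rv (k + 2) j := by
  rw [Rv_succ (k + 1)]
  fin_cases j <;>
    simp [Ehat, E3, Matrix.mulVec, dotProduct, Fin.sum_univ_three, Rv_one, map_ofNat]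

lemma IB_le_comap_elimHom :
    IB m ≤ (Ideal.span ({X 1 * (X 2 + X 3 - 4 * X 0)} ∪ Set.range (Rv (m + 2)))).comap
      (elimHom m) := by
  rw [IB, Ideal.span_le]
  rintro _ (((rfl | rfl) | ⟨⟨k, j⟩, rfl⟩) | ⟨j, rfl⟩)
  · simp [Rv_one, map_ofNat]
  · refine Ideal.subset_span (Or.inl ?_)
    simp [Rv_one, map_ofNat]
  · simp [elimHom_Ehat_mulVec_rhat]
  · refine Ideal.subset_span (Or.inr ⟨j, ?_⟩)
    simp [elimHom_Ehat_mulVec_rhat]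

lemma ψ_X (i : Fin 4) : ψ m (X i) =
    Ideal.Quotient.mk (IB m) (![bB m, qB m, rhat m 0 1, rhat m 0 2] i) := by
  fin_cases i <;> simp [ψ]

lemma ψ_E3_mulVec (v : Fin 3 → P4) (w : Fin 3 → B m)
    (h : ∀ j, ψ m (v j) = Ideal.Quotient.mk (IB m) (w j)) (j : Fin 3) :
    ψ m (E3.mulVec v j) = Ideal.Quotient.mk (IB m) ((Ehat m).mulVec w j) := by
  fin_cases j <;>
    simp [Ehat, E3, Matrix.mulVec, dotProduct, Fin.sum_univ_three, h, ψ_X, map_ofNat]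

lemma ψ_Rv (k : Fin (m + 1)) (j : Fin 3) :
    ψ m (Rv (k + 1) j) = Ideal.Quotient.mk (IB m) (rhat m k j) := by
  induction k using Fin.induction generalizing j with
  | zero =>
    fin_cases j
    · have h : rhat m 0 0 - bB m ^ 2 - 4 * qB m ∈ IB m :=
        Ideal.subset_span (Or.inl (Or.inl (Or.inl rfl)))
      rw [← Ideal.Quotient.eq_zero_iff_mem] at h
      simp only [map_sub, map_mul, map_pow, map_ofNat] at h
      simp only [Fin.zero_eta, Fin.coe_ofNat_eq_mod, Nat.zero_mod, zero_add, Rv_one,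
        Matrix.cons_val_zero, map_add, map_mul, map_pow, map_ofNat, ψ_X]
      simp only [Matrix.cons_val_zero, Matrix.cons_val_one]
      linear_combination -h
    · simp [Rv_one, ψ_X]
    · simp [Rv_one, ψ_X]
  | succ k ih =>
    have h : rhat m k.succ j - (Ehat m).mulVec (rhat m k.castSucc) j ∈ IB m :=
      Ideal.subset_span (Or.inl (Or.inr ⟨(k, j), rfl⟩))
    rw [Ideal.Quotient.eq.mpr h, Rv_succ]
    exact ψ_E3_mulVec m _ _ ih j

lemma ψ_comp_elimHom : (ψ m).comp (elimHom m) = Ideal.Quotient.mkₐ ℂ (IB m) := by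
  refine MvPolynomial.algHom_ext ?_
  rintro (i | ⟨k, j⟩)
  · fin_cases i <;> simp [elimHom, ψ_X, bB, qB]
  · exact (congrArg (ψ m) (elimHom_rhat m k j)).trans (ψ_Rv m k j)

/-- For `n = m + 2 ≥ 2`, the `ℂ`-algebra homomorphism
`ℂ[b,q,r₁,r₂] → B/I` (`b ↦ b`, `q ↦ q`, `r₁ ↦ r_{2,1}`, `r₂ ↦ r_{2,2}`) is surjective
and its kernel is the ideal `(q(r₁+r₂−4b), R_{n+1})`; that is, it induces an isomorphism
`ℂ[b,q,r₁,r₂]/(q(r₁+r₂−4b), R_{n+1}) ≅ B/I`. -/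
theorem stmt10 (m : ℕ) :
    Function.Surjective (ψ m) ∧
    RingHom.ker (ψ m) =
      Ideal.span ({X 1 * (X 2 + X 3 - 4 * X 0)} ∪ Set.range (Rv (m + 2))) := by
  constructor
  · intro y
    obtain ⟨x, rfl⟩ := Ideal.Quotient.mk_surjective y
    exact ⟨elimHom m x, DFunLike.congr_fun (ψ_comp_elimHom m) x⟩
  · apply le_antisymm
    · intro x hx
      set J : Ideal P4 :=
        Ideal.span ({X 1 * (X 2 + X 3 - 4 * X 0)} ∪ Set.range (Rv (m + 2)))
      have hcomp : (Ideal.quotientMapₐ J (elimHom m) (IB_le_comap_elimHom m)).comp (ψ m) =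
          Ideal.Quotient.mkₐ ℂ J := by
        refine MvPolynomial.algHom_ext ?_
        intro i
        fin_cases i <;> simp [ψ_X, Rv_one]
      rw [← Ideal.Quotient.eq_zero_iff_mem]
      have h := DFunLike.congr_fun hcomp x
      rw [AlgHom.comp_apply, (RingHom.mem_ker).mp hx, map_zero] at h
      exact h.symm
    · rw [Ideal.span_le]
      rintro _ (rfl | ⟨j, rfl⟩)
      · have h : qB m * (rhat m 0 1 + rhat m 0 2 - 4 * bB m) ∈ IB m :=
          Ideal.subset_span (Or.inl (Or.inl (Or.inr rfl)))
        rw [← Ideal.Quotient.eq_zero_iff_mem] at h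
        simpa [RingHom.mem_ker, ψ_X, map_ofNat] using h
      · have h : (Ehat m).mulVec (rhat m (Fin.last m)) j ∈ IB m :=
          Ideal.subset_span (Or.inr ⟨j, rfl⟩)
        rw [← Ideal.Quotient.eq_zero_iff_mem] at h
        rw [SetLike.mem_coe, RingHom.mem_ker, Rv_succ, ← h]
        exact ψ_E3_mulVec m _ _ (ψ_Rv m (Fin.last m)) j

end
end

section
/- For every integer n ≥ 1, the only common zero in ℂ³ of the three polynomials u_{n+1}, v_{n+1}, w_{n+1} is the origin: if (β,θ,κ) ∈ ℂ³ satisfies u_{n+1}(β,θ,κ) = v_{n+1}(β,θ,κ) = w_{n+1}(β,θ,κ) = 0, then β = θ = κ = 0. -/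
open MvPolynomial

noncomputable section

/-- `ℂ[b,t,k]`, with variables `0 = b`, `1 = t`, `2 = k`. -/
abbrev R3 : Type := MvPolynomial (Fin 3) ℂ

/-- The 3×3 matrix `A` with rows `(b,0,0)`, `(1,0,k)`, `(0,1,t)`. -/
def A3 : Matrix (Fin 3) (Fin 3) R3 :=
  !![X 0, 0, 0;
     1, 0, X 2;
     0, 1, X 1]

/-- `G₁ = (b(2b−t), 2b−t, 2)ᵀ`. -/
def G1 : Fin 3 → R3 := ![X 0 * (2 * X 0 - X 1), 2 * X 0 - X 1, 2]

/-- `G_{n+1} = Aⁿ·G₁`, with components `u_{n+1}, v_{n+1}, w_{n+1}`. -/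
def G (n : ℕ) : Fin 3 → R3 := (A3 ^ n).mulVec G1

theorem G_succ (n : ℕ) : G (n + 1) = A3.mulVec (G n) := by
  simp [G, pow_succ', Matrix.mulVec_mulVec]

section Evaluation

variable (β θ κ : ℂ) (n : ℕ)

theorem eval_G_succ_zero :
    eval ![β, θ, κ] (G (n + 1) 0) = β * eval ![β, θ, κ] (G n 0) := by
  simp [G_succ, A3, Matrix.mulVec, dotProduct, Fin.sum_univ_three]

theorem eval_G_succ_one :
    eval ![β, θ, κ] (G (n + 1) 1) =
      eval ![β, θ, κ] (G n 0) + κ * eval ![β, θ, κ] (G n 2) := by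
  simp [G_succ, A3, Matrix.mulVec, dotProduct, Fin.sum_univ_three]

theorem eval_G_succ_two :
    eval ![β, θ, κ] (G (n + 1) 2) =
      eval ![β, θ, κ] (G n 1) + θ * eval ![β, θ, κ] (G n 2) := by
  simp [G_succ, A3, Matrix.mulVec, dotProduct, Fin.sum_univ_three]

theorem eval_G_zero_zero : eval ![β, θ, κ] (G 0 0) = β * (2 * β - θ) := by
  simp [G, G1]

theorem eval_G_zero_one : eval ![β, θ, κ] (G 0 1) = 2 * β - θ := by
  simp [G, G1]

theorem eval_G_zero_two : eval ![β, θ, κ] (G 0 2) = 2 := by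
  simp [G, G1]

theorem eval_G_zero : eval ![β, θ, κ] (G n 0) = β ^ n * (β * (2 * β - θ)) := by
  induction n with
  | zero => simp [eval_G_zero_zero]
  | succ n ih => rw [eval_G_succ_zero, ih]; ring

variable {β θ κ}

/-- When `u₁` vanishes and `κ ≠ 0`, the pair `(v, w)` never vanishes, since it evolves by an
invertible matrix. -/
theorem eval_G_one_two_ne_zero (hu : β * (2 * β - θ) = 0) (hκ : κ ≠ 0) :
    ¬(eval ![β, θ, κ] (G n 1) = 0 ∧ eval ![β, θ, κ] (G n 2) = 0) := by
  induction n with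
  | zero => simp [eval_G_zero_two]
  | succ n ih =>
    rintro ⟨hv, hw⟩
    rw [eval_G_succ_one, eval_G_zero, hu, mul_zero, zero_add] at hv
    have hw' := (mul_eq_zero.mp hv).resolve_left hκ
    rw [eval_G_succ_two, hw', mul_zero, add_zero] at hw
    exact ih ⟨hw, hw'⟩

theorem eval_G_succ_two_of_eq_zero (hu : β * (2 * β - θ) = 0) :
    eval ![β, θ, 0] (G (n + 1) 2) = θ ^ n * (2 * β + θ) := by
  induction n with
  | zero =>
    rw [eval_G_succ_two, eval_G_zero_one, eval_G_zero_two]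
    ring
  | succ n ih =>
    rw [eval_G_succ_two, ih, eval_G_succ_one, eval_G_zero, hu]
    ring

end Evaluation

/-- For every `n ≥ 1`, the only common zero in `ℂ³` of the three
polynomials `u_{n+1}, v_{n+1}, w_{n+1}` (the components of `G_{n+1} = Aⁿ·G₁`) is the
origin. -/
theorem stmt11 (n : ℕ) (hn : 1 ≤ n) (β θ κ : ℂ)
    (h : ∀ j : Fin 3, eval ![β, θ, κ] (G n j) = 0) :
    β = 0 ∧ θ = 0 ∧ κ = 0 := by
  have hu : β * (2 * β - θ) = 0 := by
    have h0 := h 0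
    rw [eval_G_zero] at h0
    rcases mul_eq_zero.mp h0 with hβ | hβ
    · rw [eq_zero_of_pow_eq_zero hβ, zero_mul]
    · exact hβ
  have hκ : κ = 0 := by
    by_contra hκ
    exact eval_G_one_two_ne_zero n hu hκ ⟨h 1, h 2⟩
  subst hκ
  obtain ⟨m, rfl⟩ := Nat.exists_eq_add_of_le' hn
  have hw := h 2
  rw [eval_G_succ_two_of_eq_zero m hu] at hw
  have hβ : β = 0 := by
    rcases mul_eq_zero.mp hw with hθ | hθ
    · rw [eq_zero_of_pow_eq_zero hθ] at hu
      simpa using hu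
    · rw [eq_neg_of_add_eq_zero_right hθ] at hu
      have : β ^ 2 = 0 := by linear_combination hu / 4
      exact eq_zero_of_pow_eq_zero this
  refine ⟨hβ, ?_, rfl⟩
  rw [hβ, mul_zero, zero_add, ← pow_succ] at hw
  exact eq_zero_of_pow_eq_zero hw

end
end

section
/- For every integer n ≥ 1, the three polynomials u_{n+1}, v_{n+1}, w_{n+1} form a regular sequence in ℂ[b,t,k], and the quotient ℂ[b,t,k]/(u_{n+1}, v_{n+1}, w_{n+1}) is a finite-dimensional ℂ-vector space. -/
open MvPolynomial

noncomputable section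

theorem G_zero : G 0 = G1 := by simp [G]

theorem G_succ_zero (n : ℕ) : G (n + 1) 0 = X 0 * G n 0 := by
  simp [G_succ, A3, Matrix.mulVec, dotProduct, Fin.sum_univ_three]

theorem G_succ_one (n : ℕ) : G (n + 1) 1 = G n 0 + X 2 * G n 2 := by
  simp [G_succ, A3, Matrix.mulVec, dotProduct, Fin.sum_univ_three]

theorem G_succ_two (n : ℕ) : G (n + 1) 2 = G n 1 + X 1 * G n 2 := by
  simp [G_succ, A3, Matrix.mulVec, dotProduct, Fin.sum_univ_three]

theorem G_zero_zero : G 0 0 = X 0 * (2 * X 0 - X 1) := by simp [G_zero, G1]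

theorem G_zero_one : G 0 1 = 2 * X 0 - X 1 := by simp [G_zero, G1]

theorem G_zero_two : G 0 2 = 2 := by simp [G_zero, G1]

theorem G_apply_zero (n : ℕ) : G n 0 = X 0 ^ (n + 1) * (2 * X 0 - X 1) := by
  induction n with
  | zero => rw [G_zero_zero, zero_add, pow_one]
  | succ n ih => rw [G_succ_zero, ih]; ring

theorem isUnit_two_R3 : IsUnit (2 : R3) := by
  rw [← map_ofNat (C : ℂ →+* R3) 2]
  exact (IsUnit.mk0 (2 : ℂ) two_ne_zero).map C

theorem constantCoeff_G {n : ℕ} (hn : 1 ≤ n) (i : Fin 3) : constantCoeff (G n i) = 0 := by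
  have h0 (m : ℕ) : constantCoeff (G m 0) = 0 := by simp [G_apply_zero]
  have h1 (m : ℕ) : constantCoeff (G m 1) = 0 := by
    cases m with
    | zero => simp [G_zero_one]
    | succ m => simp [G_succ_one, h0]
  obtain ⟨m, rfl⟩ := Nat.exists_eq_add_of_le' hn
  fin_cases i
  · exact h0 _
  · exact h1 _
  · simp [G_succ_two, h1]

section RegularityModProducts

variable {R : Type*} [CommRing R]

/-- Two consecutive terms of a linear recurrence with companion matrix `(0 k; 1 t)` stay
relatively prime. -/
theorem isRelPrime_of_companion_recurrence [DecompositionMonoid R] {k t : R} {v w : ℕ → R}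
    (hv : ∀ n, v (n + 1) = k * w n) (hw : ∀ n, w (n + 1) = v n + t * w n)
    (h0 : IsUnit (w 0)) (hkt : IsRelPrime k t) (hk : IsRelPrime k (w 1)) (n : ℕ) :
    IsRelPrime (v n) (w n) := by
  have hkw (n : ℕ) : IsRelPrime k (w (n + 1)) := by
    induction n with
    | zero => exact hk
    | succ n ih =>
      rw [hw, hv]
      exact (hkt.mul_right ih).mul_add_left_right _
  induction n with
  | zero => exact h0.isRelPrime_right
  | succ n ih =>
    rw [hv]
    refine (hkw n).mul_left ?_
    rw [hw]
    exact ih.symm.add_mul_right_right _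

/-- If `w` is a nonzerodivisor modulo `(p, v)` and modulo `(q, v)`, with `v, p` relatively prime,
then `w` is a nonzerodivisor modulo `(p * q, v)`. -/
theorem mem_span_mul_pair_of_mul_mem [DecompositionMonoid R] {p q v w : R}
    (hpv : IsRelPrime v p)
    (hp : ∀ f, w * f ∈ Ideal.span {p, v} → f ∈ Ideal.span {p, v})
    (hq : ∀ f, w * f ∈ Ideal.span {q, v} → f ∈ Ideal.span {q, v})
    (f : R) (hf : w * f ∈ Ideal.span {p * q, v}) : f ∈ Ideal.span {p * q, v} := by
  simp only [Ideal.mem_span_pair] at hp hq hf ⊢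
  obtain ⟨x, y, hxy⟩ := hf
  obtain ⟨a, c, rfl⟩ := hp f ⟨x * q, y, by rw [← hxy]; ring⟩
  obtain ⟨z, hz⟩ : v ∣ w * a - q * x :=
    hpv.dvd_of_dvd_mul_left ⟨y - w * c, by linear_combination -hxy⟩
  obtain ⟨d, e, rfl⟩ := hq a ⟨x, z, by linear_combination -hz⟩
  exact ⟨d, e * p + c, by ring⟩

/-- A version of `mem_span_mul_pair_of_mul_mem` for powers. -/
theorem mem_span_pow_pair_of_mul_mem [DecompositionMonoid R] {p v w : R} (hpv : IsRelPrime v p)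
    (hp : ∀ f, w * f ∈ Ideal.span {p, v} → f ∈ Ideal.span {p, v}) (m : ℕ) (f : R)
    (hf : w * f ∈ Ideal.span {p ^ m, v}) : f ∈ Ideal.span {p ^ m, v} := by
  induction m generalizing f with
  | zero => exact Ideal.mem_span_pair.mpr ⟨f, 0, by ring⟩
  | succ m ih =>
    rw [pow_succ'] at hf ⊢
    exact mem_span_mul_pair_of_mul_mem hpv hp ih f hf

/-- Let `φ` be an endomorphism that is the identity modulo `p` and kills `p`. If `φ v` and `φ w`
are relatively prime, then `w` is a nonzerodivisor modulo `(p, v)`. -/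
theorem mem_span_pair_of_mul_mem_of_retraction [DecompositionMonoid R] {p v w : R} (φ : R →+* R)
    (hφp : φ p = 0) (hφ : ∀ f, p ∣ f - φ f) (h : IsRelPrime (φ v) (φ w)) (f : R)
    (hf : w * f ∈ Ideal.span {p, v}) : f ∈ Ideal.span {p, v} := by
  rw [Ideal.mem_span_pair] at hf ⊢
  obtain ⟨x, y, hxy⟩ := hf
  have h' := congrArg φ hxy
  simp only [map_add, map_mul, hφp, mul_zero, zero_add] at h'
  obtain ⟨z, hz⟩ := h.dvd_of_dvd_mul_left ⟨φ y, by rw [← h', mul_comm]⟩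
  obtain ⟨c, hc⟩ := hφ f
  obtain ⟨d, hd⟩ := hφ v
  exact ⟨c - d * z, z, by linear_combination -hc - hz + z * hd⟩

/-- Let `φ` be an endomorphism of a domain that is the identity modulo `p` and kills `p ≠ 0`.
Then `p` is relatively prime to everything outside the kernel of `φ`. -/
theorem isRelPrime_of_retraction [IsDomain R] {p v : R} (φ : R →+* R) (hp : p ≠ 0)
    (hφp : φ p = 0) (hφ : ∀ f, p ∣ f - φ f) (hv : φ v ≠ 0) : IsRelPrime v p := by
  have dvd_of_map {f : R} (hf : φ f = 0) : p ∣ f := by simpa [hf] using hφ f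
  have map_of_dvd {f : R} (hf : p ∣ f) : φ f = 0 := by
    obtain ⟨c, rfl⟩ := hf
    rw [map_mul, hφp, zero_mul]
  have hprime : Prime p := by
    refine ⟨hp, fun hu => ?_, fun a b hab => ?_⟩
    · exact one_ne_zero (φ.map_one.symm.trans (map_of_dvd hu.dvd))
    · have := map_of_dvd hab
      rw [map_mul, mul_eq_zero] at this
      exact this.imp dvd_of_map dvd_of_map
  exact (hprime.irreducible.isRelPrime_iff_not_dvd.mpr fun h => hv (map_of_dvd h)).symm

/-- A criterion for a sequence of length three to be regular in a domain. -/
theorem isRegular_triple [IsDomain R] [DecompositionMonoid R] {u v w : R} (hu : u ≠ 0)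
    (huv : IsRelPrime v u)
    (hw : ∀ f, w * f ∈ Ideal.span {u, v} → f ∈ Ideal.span {u, v})
    (htop : Ideal.span {u, v, w} ≠ ⊤) : RingTheory.Sequence.IsRegular R [u, v, w] := by
  have hpair : Ideal.ofList [u, v] = Ideal.span {u, v} := by
    simp [← Ideal.span_insert]
  have htriple : Ideal.ofList [u, v, w] = Ideal.span {u, v, w} := by
    simp [← Ideal.span_insert]
  refine ⟨⟨fun i hi => ?_⟩, ?_⟩
  · rw [isSMulRegular_quotient_iff_mem_of_smul_mem]
    intro f hf
    simp only [smul_eq_mul, Ideal.mul_top] at hf ⊢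
    match i, hi with
    | 0, _ => simpa [hu] using hf
    | 1, _ =>
      simp only [List.take_succ_cons, List.take_zero, Ideal.ofList_singleton,
        Ideal.mem_span_singleton] at hf ⊢
      exact huv.symm.dvd_of_dvd_mul_left hf
    | 2, _ =>
      change w * f ∈ Ideal.ofList [u, v] at hf
      change f ∈ Ideal.ofList [u, v]
      rw [hpair] at hf ⊢
      exact hw f hf
  · rw [smul_eq_mul, Ideal.mul_top, htriple]
    exact htop.symm

end RegularityModProducts

theorem isRelPrime_X_X {i j : Fin 3} (h : i ≠ j) : IsRelPrime (X i : R3) (X j) :=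
  (X_prime (R := ℂ)).irreducible.isRelPrime_iff_not_dvd.mpr fun hd => h (X_dvd_X.mp hd)

/-- A substitution fixing the variables modulo `p` is the identity modulo `p`. -/
theorem dvd_sub_aeval {p : R3} {s : Fin 3 → R3} (hs : ∀ i, p ∣ X i - s i) (f : R3) :
    p ∣ f - aeval s f := by
  have h : (Ideal.Quotient.mkₐ ℂ (Ideal.span {p})).comp (aeval s) =
      Ideal.Quotient.mkₐ ℂ (Ideal.span {p}) := by
    refine algHom_ext fun i => ?_
    simp only [AlgHom.comp_apply, aeval_X, Ideal.Quotient.mkₐ_eq_mk]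
    exact (Ideal.Quotient.eq.mpr (Ideal.mem_span_singleton.mpr (hs i))).symm
  rw [← Ideal.mem_span_singleton, ← Ideal.Quotient.eq]
  exact (DFunLike.congr_fun h f).symm

/-- Regularity of `G n 1, G n 2` modulo a linear factor `p` of `G n 0`, cut out by a substitution
`s` fixing `k` and sending `b, t` to forms killing every `G n 0`. -/
theorem regular_mod_linear_factor {p : R3} {s : Fin 3 → R3} (hp : p ≠ 0) (hsp : aeval s p = 0)
    (hs : ∀ i, p ∣ X i - s i) (hs2 : s 2 = X 2) (hs1 : IsRelPrime (X 2) (s 1))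
    (hu : ∀ n, aeval s (G n 0) = 0) (hw1 : IsRelPrime (X 2) (aeval s (G 1 2)))
    (hconst : ∀ f : R3, constantCoeff (aeval s f) = constantCoeff f) {n : ℕ} (hn : 1 ≤ n) :
    IsRelPrime (G n 1) p ∧
      ∀ f, G n 2 * f ∈ Ideal.span {p, G n 1} → f ∈ Ideal.span {p, G n 1} := by
  let φ : R3 →+* R3 := (aeval s : R3 →ₐ[ℂ] R3)
  have hrel : IsRelPrime (φ (G n 1)) (φ (G n 2)) := by
    refine isRelPrime_of_companion_recurrence (k := X 2) (t := s 1)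
      (v := fun n => φ (G n 1)) (w := fun n => φ (G n 2)) ?_ ?_ ?_ hs1 hw1 n
    · intro m
      simp only [φ, G_succ_one, RingHom.coe_coe, map_add, map_mul, hu, aeval_X, hs2, zero_add]
    · intro m
      simp [φ, G_succ_two]
    · simpa only [G_zero_two, map_ofNat] using isUnit_two_R3
  have hv : φ (G n 1) ≠ 0 := fun h0 => by
    rw [h0, isRelPrime_zero_left] at hrel
    have := hrel.map (constantCoeff (R := ℂ) (σ := Fin 3))
    have h2 : constantCoeff (φ (G n 2)) = 0 := (hconst _).trans (constantCoeff_G hn 2)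
    rw [h2] at this
    exact not_isUnit_zero this
  exact ⟨isRelPrime_of_retraction φ hp hsp (dvd_sub_aeval hs) hv,
    mem_span_pair_of_mul_mem_of_retraction φ hsp (dvd_sub_aeval hs) hrel⟩

theorem constantCoeff_aeval {s : Fin 3 → R3} (hs : ∀ i, constantCoeff (s i) = 0) (f : R3) :
    constantCoeff (aeval s f) = constantCoeff f := by
  induction f using MvPolynomial.induction_on with
  | C a => simp
  | add p q hp hq => simp only [map_add, hp, hq]
  | mul_X p i hp => simp [hs]

theorem two_mul_X_sub_X_ne_zero : (2 * X 0 - X 1 : R3) ≠ 0 := fun h => by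
  have := congrArg (eval ![(0 : ℂ), 1, 0]) h
  simp at this

theorem regular_mod_X_zero {n : ℕ} (hn : 1 ≤ n) :
    IsRelPrime (G n 1) (X 0) ∧
      ∀ f, G n 2 * f ∈ Ideal.span {X 0, G n 1} → f ∈ Ideal.span {X 0, G n 1} := by
  refine regular_mod_linear_factor (s := ![0, X 1, X 2]) (X_ne_zero _) (by simp) ?_ rfl
    (isRelPrime_X_X (by decide)) ?_ ?_ (constantCoeff_aeval ?_) hn
  · intro i; fin_cases i <;> simp
  · intro m; simp [G_apply_zero]
  · have : aeval ![0, X 1, X 2] (G 1 2) = (X 1 : R3) := by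
      rw [G_succ_two, G_zero_one, G_zero_two]
      simp only [map_add, map_sub, map_mul, map_ofNat, aeval_X, Matrix.cons_val]
      ring
    rw [this]
    exact isRelPrime_X_X (by decide)
  · intro i; fin_cases i <;> simp

theorem regular_mod_two_mul_X_sub_X {n : ℕ} (hn : 1 ≤ n) :
    IsRelPrime (G n 1) (2 * X 0 - X 1) ∧
      ∀ f, G n 2 * f ∈ Ideal.span {2 * X 0 - X 1, G n 1} →
        f ∈ Ideal.span {2 * X 0 - X 1, G n 1} := by
  have h20 : IsRelPrime (X 2 : R3) (2 * X 0) :=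
    isUnit_two_R3.isRelPrime_right.mul_right (isRelPrime_X_X (by decide))
  refine regular_mod_linear_factor (s := ![X 0, 2 * X 0, X 2]) two_mul_X_sub_X_ne_zero
    (by simp [map_ofNat (bind₁ _)]) ?_ rfl h20 ?_ ?_ (constantCoeff_aeval ?_) hn
  · intro i
    fin_cases i
    · simp
    · exact ⟨-1, by simp⟩
    · simp
  · intro m; simp [G_apply_zero, map_ofNat (bind₁ _)]
  · have : aeval ![X 0, 2 * X 0, X 2] (G 1 2) = (2 * X 0 * 2 : R3) := by
      rw [G_succ_two, G_zero_one, G_zero_two]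
      simp only [map_add, map_sub, map_mul, map_ofNat, aeval_X, Matrix.cons_val]
      ring
    rw [this]
    exact h20.mul_right isUnit_two_R3.isRelPrime_right
  · intro i; fin_cases i <;> simp

theorem span_G_ne_top {n : ℕ} (hn : 1 ≤ n) : Ideal.span {G n 0, G n 1, G n 2} ≠ ⊤ := by
  intro h
  have hle : Ideal.span {G n 0, G n 1, G n 2} ≤ RingHom.ker (constantCoeff (R := ℂ)) := by
    rw [Ideal.span_le]
    rintro x (rfl | rfl | rfl) <;> exact constantCoeff_G hn _
  rw [h] at hle
  exact RingHom.ker_ne_top _ (top_le_iff.mp hle)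

/-- A prime ideal containing the three polynomials contains all the variables. -/
theorem X_mem_of_isPrime {n : ℕ} (hn : 1 ≤ n) {P : Ideal R3} [hP : P.IsPrime]
    (h0 : G n 0 ∈ P) (h1 : G n 1 ∈ P) (h2 : G n 2 ∈ P) (i : Fin 3) : X i ∈ P := by
  have two_notMem : (2 : R3) ∉ P := fun h =>
    hP.ne_top (Ideal.eq_top_of_isUnit_mem _ h isUnit_two_R3)
  have hbt : (X 0 : R3) ∈ P ∨ (2 * X 0 - X 1 : R3) ∈ P := by
    rw [G_apply_zero] at h0
    exact (hP.mem_or_mem h0).imp_left (hP.mem_of_pow_mem _)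
  have hu (m : ℕ) : G m 0 ∈ P := by
    rw [G_apply_zero]
    exact hbt.elim (fun h => P.mul_mem_right _ (P.pow_mem_of_mem h _ m.succ_pos))
      (fun h => P.mul_mem_left _ h)
  have hk : (X 2 : R3) ∈ P := by
    by_contra hk
    have descend (m : ℕ) (hv : G m 1 ∈ P) (hw : G m 2 ∈ P) : False := by
      induction m with
      | zero => exact two_notMem (G_zero_two ▸ hw)
      | succ m ih =>
        rw [G_succ_one, P.add_mem_iff_right (hu m)] at hv
        have hw' := (hP.mem_or_mem hv).resolve_left hk
        rw [G_succ_two, P.add_mem_iff_left (P.mul_mem_left _ hw')] at hw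
        exact ih hw hw'
    exact descend n h1 h2
  have hv (m : ℕ) : G (m + 1) 1 ∈ P := by
    rw [G_succ_one]
    exact P.add_mem (hu m) (P.mul_mem_right _ hk)
  have mem_of_two_mul_mem {f : R3} (h : 2 * f ∈ P) : f ∈ P := (hP.mem_or_mem h).resolve_left two_notMem
  have ht' : (X 1 : R3) ∈ P ∨ (2 * X 0 + X 1 : R3) ∈ P := by
    obtain ⟨m, rfl⟩ := Nat.exists_eq_add_of_le' hn
    clear hn h0 h1
    induction m with
    | zero =>
      right
      rw [G_succ_two, G_zero_one, G_zero_two] at h2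
      convert h2 using 1
      ring
    | succ m ih =>
      rw [G_succ_two, P.add_mem_iff_right (hv m)] at h2
      exact (hP.mem_or_mem h2).elim Or.inl ih
  have ht : (X 1 : R3) ∈ P := by
    refine ht'.elim id fun h => ?_
    rcases hbt with hb | hb
    · exact (P.add_mem_iff_right (P.mul_mem_left _ hb)).mp h
    · refine mem_of_two_mul_mem ?_
      convert P.sub_mem h hb using 1
      ring
  have hb : (X 0 : R3) ∈ P := by
    refine hbt.elim id fun h => mem_of_two_mul_mem ?_
    convert P.add_mem h ht using 1
    ring
  fin_cases i
  exacts [hb, ht, hk]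

/-- A quotient of a polynomial ring in which all variables are nilpotent is finite-dimensional. -/
theorem finiteDimensional_quotient_of_X_mem_radical {σ K : Type*} [Finite σ] [Field K]
    {I : Ideal (MvPolynomial σ K)} (h : ∀ i, X i ∈ I.radical) :
    FiniteDimensional K (MvPolynomial σ K ⧸ I) := by
  have hint : Algebra.IsIntegral K (MvPolynomial σ K ⧸ I) := by
    refine ⟨fun x => ?_⟩
    obtain ⟨f, rfl⟩ := Ideal.Quotient.mk_surjective x
    induction f using MvPolynomial.induction_on with
    | C a => exact isIntegral_algebraMap (R := K) (A := MvPolynomial σ K ⧸ I) (x := a)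
    | add p q hp hq => rw [map_add]; exact hp.add hq
    | mul_X p i hp =>
      rw [map_mul]
      refine hp.mul ?_
      obtain ⟨m, hm⟩ := h i
      refine ⟨Polynomial.X ^ m, Polynomial.monic_X_pow m, ?_⟩
      simpa [← map_pow] using Ideal.Quotient.eq_zero_iff_mem.mpr hm
  exact Algebra.IsIntegral.finite

/-- For every `n ≥ 1`, the three polynomials
`u_{n+1}, v_{n+1}, w_{n+1}` form a regular sequence in `ℂ[b,t,k]`, and the quotient
`ℂ[b,t,k]/(u_{n+1}, v_{n+1}, w_{n+1})` is a finite-dimensional `ℂ`-vector space. -/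
theorem stmt12 (n : ℕ) (hn : 1 ≤ n) :
    RingTheory.Sequence.IsRegular R3 [G n 0, G n 1, G n 2] ∧
    FiniteDimensional ℂ (R3 ⧸ Ideal.span {G n 0, G n 1, G n 2}) := by
  obtain ⟨hb, hb'⟩ := regular_mod_X_zero hn
  obtain ⟨hbt, hbt'⟩ := regular_mod_two_mul_X_sub_X hn
  have hpow (m : ℕ) : IsRelPrime (G n 1) (X 0 ^ m) := by
    induction m with
    | zero => simpa using isRelPrime_one_right
    | succ m ih => rw [pow_succ]; exact ih.mul_right hb
  refine ⟨isRegular_triple ?_ ?_ ?_ (span_G_ne_top hn),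
    finiteDimensional_quotient_of_X_mem_radical fun i => ?_⟩
  · rw [G_apply_zero]
    exact mul_ne_zero (pow_ne_zero _ (X_ne_zero _)) two_mul_X_sub_X_ne_zero
  · rw [G_apply_zero]
    exact (hpow _).mul_right hbt
  · rw [G_apply_zero]
    exact mem_span_mul_pair_of_mul_mem (hpow _) (mem_span_pow_pair_of_mul_mem hb hb' _) hbt'
  · rw [Ideal.radical_eq_sInf, Submodule.mem_sInf]
    rintro P ⟨hle, hP⟩
    rw [Ideal.span_le] at hle
    exact X_mem_of_isPrime hn (hle (by simp)) (hle (by simp)) (hle (by simp)) i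

end
end

section
/- Let H be the 3×3 matrix over ℂ[b,q,r₁,r₂] with rows (4b−r₁−r₂, 0, 0), (2, b−r₂, b−r₁), (0, 1, 1). Then: (i) every entry of H·E − φ(A)·H lies in the principal ideal (q(r₁+r₂−4b)), where φ(A) denotes A with its entries transported by φ; (ii) H·R₁ = φ(G₁) exactly; (iii) consequently, for every n ≥ 0, every component of H·R_{n+1} − φ(G_{n+1}) lies in the ideal (q(r₁+r₂−4b)). -/
open MvPolynomial

noncomputable section

/-- `R₁ = (b,1,1)ᵀ`. -/
def R1 : Fin 3 → P4 := ![X 0, 1, 1]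

/-- The `ℂ`-algebra homomorphism `φ : ℂ[b,t,k] → ℂ[b,q,r₁,r₂]` with `φ(b)=b`,
`φ(t)=r₁+r₂−2b`, `φ(k)=4q−(b−r₁)(b−r₂)`. -/
def φ : R3 →ₐ[ℂ] P4 :=
  aeval ![X 0, X 2 + X 3 - 2 * X 0, 4 * X 1 - (X 0 - X 2) * (X 0 - X 3)]

/-- The 3×3 matrix `H` over `ℂ[b,q,r₁,r₂]` with rows `(4b−r₁−r₂, 0, 0)`,
`(2, b−r₂, b−r₁)`, `(0, 1, 1)`. -/
def H3 : Matrix (Fin 3) (Fin 3) P4 :=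
  !![4 * X 0 - X 2 - X 3, 0, 0;
     2, X 0 - X 3, X 0 - X 2;
     0, 1, 1]

/-- If `H` intertwines `E` and `A` modulo an ideal `I`, then it carries the `E`-orbit of `v` to the
`A`-orbit of `H v` modulo `I`. -/
theorem mulVec_pow_sub_mem_of_intertwines {m n R : Type*} [Fintype m] [DecidableEq m] [Fintype n]
    [DecidableEq n] [CommRing R] {I : Ideal R} {H : Matrix m n R} {E : Matrix n n R}
    {A : Matrix m m R} (h : ∀ i j, (H * E - A * H) i j ∈ I) (v : n → R) (k : ℕ) (i : m) :
    H.mulVec ((E ^ k).mulVec v) i - (A ^ k).mulVec (H.mulVec v) i ∈ I := by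
  induction k generalizing i with
  | zero => simp
  | succ k ih =>
    have key : H.mulVec ((E ^ (k + 1)).mulVec v) - (A ^ (k + 1)).mulVec (H.mulVec v) =
        (H * E - A * H).mulVec ((E ^ k).mulVec v) +
          A.mulVec (H.mulVec ((E ^ k).mulVec v) - (A ^ k).mulVec (H.mulVec v)) := by
      simp only [pow_succ', Matrix.sub_mulVec, Matrix.mulVec_sub, ← Matrix.mulVec_mulVec]
      abel
    rw [← Pi.sub_apply, key, Pi.add_apply]
    exact I.add_mem (I.sum_mem fun j _ => I.mul_mem_right _ (h i j))
      (I.sum_mem fun j _ => I.mul_mem_left _ (ih j))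

theorem H3_intertwines : H3 * E3 - A3.map φ * H3 =
    (X 1 * (X 2 + X 3 - 4 * X 0) : P4) • !![0, -2, -2; 0, 0, 0; 0, 0, 0] := by
  ext1 i j
  fin_cases i <;> fin_cases j <;>
    simp [H3, E3, A3, φ, Matrix.mul_apply, Fin.sum_univ_three] <;> ring

theorem H3_mulVec_R1 : H3.mulVec R1 = fun j => φ (G1 j) := by
  have φ_X (i : Fin 3) : φ (X i) =
      ![X 0, X 2 + X 3 - 2 * X 0, 4 * X 1 - (X 0 - X 2) * (X 0 - X 3)] i := aeval_X _ i
  have φ_two : φ 2 = 2 := map_ofNat φ 2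
  ext1 j
  fin_cases j <;>
    simp [H3, R1, G1, φ_X, φ_two, Matrix.mulVec, dotProduct, Fin.sum_univ_three] <;> ring

/-- (i) Every entry of `H·E − φ(A)·H` lies in the principal ideal
`(q(r₁+r₂−4b))`; (ii) `H·R₁ = φ(G₁)` exactly; (iii) consequently, for every `n ≥ 0`,
every component of `H·R_{n+1} − φ(G_{n+1})` lies in the ideal `(q(r₁+r₂−4b))`. -/
theorem stmt14 :
    (∀ i j : Fin 3,
      (H3 * E3 - (A3.map φ) * H3) i j ∈
        Ideal.span {(X 1 * (X 2 + X 3 - 4 * X 0) : P4)}) ∧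
    (H3.mulVec R1 = fun j => φ (G1 j)) ∧
    (∀ n : ℕ, ∀ j : Fin 3,
      H3.mulVec ((E3 ^ n).mulVec R1) j - φ (((A3 ^ n).mulVec G1) j) ∈
        Ideal.span {(X 1 * (X 2 + X 3 - 4 * X 0) : P4)}) := by
  have intertwines : ∀ i j : Fin 3, (H3 * E3 - (A3.map φ) * H3) i j ∈
      Ideal.span {(X 1 * (X 2 + X 3 - 4 * X 0) : P4)} := fun i j => by
    rw [H3_intertwines, Matrix.smul_apply, smul_eq_mul]
    exact Ideal.mul_mem_right _ _ (Ideal.mem_span_singleton_self _)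
  refine ⟨intertwines, H3_mulVec_R1, fun n j => ?_⟩
  have φ_orbit : φ (((A3 ^ n).mulVec G1) j) = ((A3.map φ) ^ n).mulVec (H3.mulVec R1) j := by
    rw [H3_mulVec_R1]
    have φ_pow : (A3 ^ n).map φ = (A3.map φ) ^ n := map_pow φ.mapMatrix A3 n
    rw [← φ_pow]
    exact RingHom.map_mulVec (φ : R3 →+* P4) _ _ j
  rw [φ_orbit]
  exact mulVec_pow_sub_mem_of_intertwines intertwines R1 n j

end
end

section
/- The composite of φ with the quotient map ℂ[b,q,r₁,r₂] → ℂ[b,q,r₁,r₂]/(q(r₁+r₂−4b)) is an injective ℂ-algebra homomorphism ℂ[b,t,k] → ℂ[b,q,r₁,r₂]/(q(r₁+r₂−4b)). -/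
open MvPolynomial

noncomputable section

/-- The principal ideal `(q(r₁+r₂−4b))` of `ℂ[b,q,r₁,r₂]`. -/
def J : Ideal P4 := Ideal.span {X 1 * (X 2 + X 3 - 4 * X 0)}

/-- Every point `(b, t, k)` is the image of a point of the hyperplane `q = 0` under the map
of affine spaces dual to `φ`. -/
lemma exists_eval_φ_eq_eval (x : Fin 3 → ℂ) :
    ∃ y : Fin 4 → ℂ, y 1 = 0 ∧ ∀ p : R3, eval y (φ p) = eval x p := by
  obtain ⟨s, hs⟩ := IsAlgClosed.exists_pow_nat_eq (x 1 ^ 2 + 4 * x 2) two_pos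
  let y : Fin 4 → ℂ := ![x 0, 0, x 0 + (x 1 + s) / 2, x 0 + (x 1 - s) / 2]
  refine ⟨y, rfl, fun p => ?_⟩
  have h : (aeval y).comp φ = aeval x := by
    ext i
    fin_cases i
    · simp [φ, y]
    · simp [φ, y]
      ring
    · simp [φ, y]
      linear_combination hs / 4
  simpa [aeval_eq_eval] using DFunLike.congr_fun h p

/-- The composite of `φ` with the quotient map
`ℂ[b,q,r₁,r₂] → ℂ[b,q,r₁,r₂]/(q(r₁+r₂−4b))` is an injective `ℂ`-algebra homomorphism
`ℂ[b,t,k] → ℂ[b,q,r₁,r₂]/(q(r₁+r₂−4b))`. -/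
theorem stmt16 :
    Function.Injective ((Ideal.Quotient.mkₐ ℂ J).comp φ) := by
  rw [injective_iff_map_eq_zero]
  intro p hp
  have hmem : φ p ∈ J := Ideal.Quotient.eq_zero_iff_mem.mp hp
  obtain ⟨c, hc⟩ := Ideal.mem_span_singleton'.mp hmem
  refine MvPolynomial.funext fun x => ?_
  obtain ⟨y, hy, h⟩ := exists_eval_φ_eq_eval x
  rw [← h p, ← hc]
  simp [hy]

end
end
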